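/- Let A = (a_{ij}), C ∈ ^cΞ with ro(A) = co(C), and suppose that C − R·E^θ_{r+1,r} is a diagonal matrix for some R ∈ ℕ. Then, as functions on X_c × X_c, e_C ∗ e_A = Σ_t q^{N(t)} · (Π_{u < r+1} [a_{r+1,u} + t_u ; t_u]_q) · (Π_{u > r+1} [a_{r+1,u} + t_u + t_{𝔫+1−u} ; t_u]_q) · (Π_{i=1}^{t_{r+1}} [a_{r+1,r+1} + 2i]_q / [i]_q) · e_{A − Σ_{u=1}^{𝔫} t_u (E^θ_{r,u} − E^θ_{r+1,u})}, where N(t) = Σ_{(j,u): j < u} a_{r+1,j} t_u + Σ_{(j,u): 𝔫+1−j < u < j} t_u t_j + Σ_{u > r+1} t_u(t_u+1)/2, and the sum is over all t = (t_1, …, t_𝔫) ∈ ℕ^𝔫 with Σ_{u=1}^{𝔫} t_u = R and t_u ≤ a_{ru} for all u. -/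

import Mathlib

open scoped Classical

noncomputable section

namespace FlagC

variable {k V : Type*} [Field k] [AddCommGroup V] [Module k V]

/-- The orthogonal complement `{v | ∀ u ∈ N, Φ u v = 0}` of a submodule with respect to a
bilinear form. -/
def perpB (Φ : V →ₗ[k] V →ₗ[k] k) (N : Submodule k V) : Submodule k V where
  carrier := {v | ∀ u ∈ N, Φ u v = 0}
  zero_mem' := fun u _ => map_zero (Φ u)
  add_mem' := fun {a b} ha hb u hu => by rw [map_add, ha u hu, hb u hu, add_zero]
  smul_mem' := fun c v hv u hu => by rw [map_smul, hv u hu, smul_zero]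

/-- A complete isotropic flag of type `C`:  `0 = L 0 ⊆ L 1 ⊆ ⋯ ⊆ L nn = V` with
`L (nn - i) = (L i)^⊥`.  (The values `L i` for `i > nn` are required to equal `⊤` so that a
flag is determined by finitely many submodules.) -/
def IsFlag (Φ : V →ₗ[k] V →ₗ[k] k) (nn : ℕ) (L : ℕ → Submodule k V) : Prop :=
  L 0 = ⊥ ∧ (∀ i, L i ≤ L (i + 1)) ∧ (∀ i, nn ≤ i → L i = ⊤) ∧
    ∀ i, i ≤ nn → L (nn - i) = perpB Φ (L i)

/-- The set `X_c` of complete isotropic flags. -/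
def Flags (Φ : V →ₗ[k] V →ₗ[k] k) (nn : ℕ) := {L : ℕ → Submodule k V // IsFlag Φ nn L}

/-- `dim_k (p / s)`, the dimension of the quotient of `p` by `s ∩ p`. -/
def relDim (p s : Submodule k V) : ℕ :=
  Module.finrank k (↥p ⧸ (s.comap p.subtype))

/-- The characteristic function `e_A` of the orbit `O_A`: the set of pairs of flags `(L, L′)`
with `dim_k (Lᵢ ∩ L′ⱼ)/(L_{i-1} ∩ L′ⱼ + Lᵢ ∩ L′_{j-1}) = A i j` for all `1 ≤ i, j ≤ nn`. -/
def eMat (Φ : V →ₗ[k] V →ₗ[k] k) (nn : ℕ) (A : ℕ → ℕ → ℤ) :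
    Flags Φ nn × Flags Φ nn → ℚ := fun LL =>
  if ∀ i ∈ Finset.Icc 1 nn, ∀ j ∈ Finset.Icc 1 nn,
      (relDim ((LL.1.1 i) ⊓ (LL.2.1 j))
        (((LL.1.1 (i - 1)) ⊓ (LL.2.1 j)) ⊔ ((LL.1.1 i) ⊓ (LL.2.1 (j - 1)))) : ℤ) = A i j
  then 1 else 0

/-- Convolution product of functions on `X_c × X_c`. -/
def conv (Φ : V →ₗ[k] V →ₗ[k] k) (nn : ℕ)
    (f g : Flags Φ nn × Flags Φ nn → ℚ) : Flags Φ nn × Flags Φ nn → ℚ :=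
  fun LL => ∑ᶠ L' : Flags Φ nn, f (LL.1, L') * g (L', LL.2)

/-- Membership in `^cΞ`: an `nn × nn` matrix of natural numbers (recorded as an
integer-valued function on `[1,nn] × [1,nn]`) with total sum `2d` and with
`a_{ij} = a_{nn+1-i, nn+1-j}`. -/
def MemXiC (nn d : ℕ) (A : ℕ → ℕ → ℤ) : Prop :=
  (∀ i ∈ Finset.Icc 1 nn, ∀ j ∈ Finset.Icc 1 nn, 0 ≤ A i j) ∧
  (∑ i ∈ Finset.Icc 1 nn, ∑ j ∈ Finset.Icc 1 nn, A i j) = 2 * d ∧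
  ∀ i ∈ Finset.Icc 1 nn, ∀ j ∈ Finset.Icc 1 nn, A i j = A (nn + 1 - i) (nn + 1 - j)

/-- Row sums. -/
def roM (nn : ℕ) (A : ℕ → ℕ → ℤ) (i : ℕ) : ℤ := ∑ j ∈ Finset.Icc 1 nn, A i j

/-- Column sums. -/
def coM (nn : ℕ) (A : ℕ → ℕ → ℤ) (j : ℕ) : ℤ := ∑ i ∈ Finset.Icc 1 nn, A i j

/-- `E^θ_{ij} = E_{ij} + E_{nn+1-i, nn+1-j}`. -/
def Eth (nn i j : ℕ) : ℕ → ℕ → ℤ := fun a b =>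
  (if a = i ∧ b = j then 1 else 0) + (if a = nn + 1 - i ∧ b = nn + 1 - j then 1 else 0)

/-- The Gaussian binomial coefficient `[m; t]_q = ∏_{i=1}^{t} (q^{m-i+1} - 1)/(q^i - 1)`. -/
def qbinom (q : ℚ) (m : ℤ) (t : ℕ) : ℚ :=
  ∏ i ∈ Finset.Icc 1 t, (q ^ (m - (i : ℤ) + 1) - 1) / (q ^ (i : ℤ) - 1)

end FlagC

open FlagC

/-- The quantum integer `[m]_q = (q^m - 1)/(q - 1)`. -/
noncomputable def qint (q : ℚ) (m : ℤ) : ℚ := (q ^ m - 1) / (q - 1)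

/-!
By the shape of `C`, the convolution at `(L, M)` counts the flags `N` which agree with `L` below
step `r`, for which `N r` is an isotropic extension of `L r` and `(N, M) ∈ O_A`. Such an `N` is
determined by `N r`. If `t u` is the dimension of the `u`-th step of `N r / L r` filtered by `M`,
passing from `(N, M)` to `(L, M)` changes row `r` of the matrix by `-t`, hence row `r + 1` by `t`,
and by duality changes rows `r + 2` and `r + 1` by the reflected amounts; so `(N, M) ∈ O_A` if and
only if `(L, M)` lies in the orbit of the summand indexed by `t`.

The isotropic extensions `U` of `S = L r` with given `t` are counted by induction on `∑ u, t u`.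
For the largest `u` with `t u ≠ 0`, double count the pairs `(v, U)` where `v ∈ U ∩ M u` is not in
`M (u - 1) + S`: for fixed `v`, the `U` are the extensions of `S + k v` with `t u` lowered by one,
and alternation of the form makes `S + k v` isotropic. As `u` is maximal, the quotient of the two
numbers of vectors is exactly the quotient of the factors which `t u` and `t u - 1` contribute to
the coefficient.
-/

namespace FlagC

open Module Finset

section Subspaces

variable {k V : Type*} [Field k] [AddCommGroup V] [Module k V] [FiniteDimensional k V]

lemma finrank_sup_span_singleton_inf_of_mem {S T : Submodule k V} {v : V} (hvT : v ∈ T)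
    (hvS : v ∉ S) : finrank k ↥((S ⊔ k ∙ v) ⊓ T) = finrank k ↥(S ⊓ T) + 1 := by
  have hmod : (S ⊔ k ∙ v) ⊓ T = S ⊓ T ⊔ k ∙ v := by
    rw [sup_comm S, sup_inf_assoc_of_le S ((Submodule.span_singleton_le_iff_mem v T).2 hvT),
      sup_comm]
  have hdisj : (S ⊓ T) ⊓ k ∙ v = ⊥ :=
    ((Submodule.disjoint_span_singleton_of_notMem hvS).mono_left inf_le_left).eq_bot
  have hv : v ≠ 0 := fun h => hvS (h ▸ S.zero_mem)
  have := Submodule.finrank_sup_add_finrank_inf_eq (S ⊓ T) (k ∙ v)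
  rw [hdisj, finrank_bot, finrank_span_singleton hv] at this
  rw [hmod]
  omega

omit [FiniteDimensional k V] in
lemma sup_span_singleton_inf_of_notMem {S T : Submodule k V} {v : V} (hv : v ∉ S ⊔ T) :
    (S ⊔ k ∙ v) ⊓ T = S ⊓ T := by
  have hmod : (S ⊔ k ∙ v) ⊓ (S ⊔ T) = S := by
    rw [sup_inf_assoc_of_le _ le_sup_left, inf_comm,
      (Submodule.disjoint_span_singleton_of_notMem hv).eq_bot, sup_bot_eq]
  refine le_antisymm (le_inf ?_ inf_le_right) (inf_le_inf_right T le_sup_left)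
  exact (inf_le_inf_left _ le_sup_right).trans hmod.le

lemma finrank_inf_inf_sup_add_finrank_inf {P Q S K : Submodule k V} (hQP : Q ≤ P) (hSK : S ≤ K) :
    finrank k ↥((P ⊓ K) ⊓ (Q ⊔ S)) + finrank k ↥(S ⊓ Q) =
      finrank k ↥(Q ⊓ K) + finrank k ↥(S ⊓ P) := by
  have hmod : (P ⊓ K) ⊓ (Q ⊔ S) = Q ⊓ K ⊔ S ⊓ P := by
    rw [inf_assoc, inf_comm K, sup_comm Q, sup_inf_assoc_of_le Q hSK, inf_comm P, sup_comm S,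
      sup_inf_assoc_of_le S (inf_le_left.trans hQP)]
  have hinf : (Q ⊓ K) ⊓ (S ⊓ P) = S ⊓ Q := by
    apply le_antisymm
    · exact le_inf (inf_le_right.trans inf_le_left) (inf_le_left.trans inf_le_left)
    · exact le_inf (le_inf inf_le_right (inf_le_left.trans hSK))
        (le_inf inf_le_left (inf_le_right.trans hQP))
  rw [hmod, ← hinf]
  exact Submodule.finrank_sup_add_finrank_inf_eq _ _

lemma ncard_sdiff_eq_pow_sub_pow [Finite k] (P Q : Submodule k V) :
    (((P : Set V) \ Q).ncard : ℚ) =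
      (Nat.card k : ℚ) ^ finrank k P - (Nat.card k : ℚ) ^ finrank k ↥(P ⊓ Q) := by
  have : Finite V := Module.finite_of_finite k
  have hcard (S : Submodule k V) : (S : Set V).ncard = Nat.card k ^ finrank k S :=
    (Nat.card_coe_set_eq _).symm.trans Module.natCard_eq_pow_finrank
  have hsplit := Set.ncard_inter_add_ncard_sdiff_eq_ncard (P : Set V) Q
  rw [← Submodule.coe_inf, hcard, hcard] at hsplit
  exact eq_sub_of_add_eq' (mod_cast hsplit)

lemma finrank_sup_span_singleton_inf_of_mem_sdiff {M : ℕ → Submodule k V} (hM : Monotone M)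
    {S : Submodule k V} {u : ℕ} {v : V} (hvM : v ∈ M u) (hv : v ∉ M (u - 1) ⊔ S) (j : ℕ) :
    finrank k ↥((S ⊔ k ∙ v) ⊓ M j) = finrank k ↥(S ⊓ M j) + if u ≤ j then 1 else 0 := by
  split_ifs with huj
  · exact finrank_sup_span_singleton_inf_of_mem (hM huj hvM) fun h => hv (le_sup_right (a := M _) h)
  · rw [sup_span_singleton_inf_of_notMem, add_zero]
    rw [sup_comm]
    exact fun h => hv (sup_le_sup_right (hM (by omega)) S h)

end Subspaces

section Orthogonal

variable {k V : Type*} [Field k] [AddCommGroup V] [Module k V] {Φ : V →ₗ[k] V →ₗ[k] k}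

lemma perpB_eq_orthogonal (Φ : V →ₗ[k] V →ₗ[k] k) (S : Submodule k V) :
    perpB Φ S = LinearMap.BilinForm.orthogonal Φ S := rfl

lemma perpB_anti {S T : Submodule k V} (h : S ≤ T) : perpB Φ T ≤ perpB Φ S :=
  LinearMap.BilinForm.orthogonal_le h

lemma le_perpB_comm (hΦ : LinearMap.IsRefl Φ) {S T : Submodule k V} :
    S ≤ perpB Φ T ↔ T ≤ perpB Φ S :=
  ⟨fun h _ ht _ hs => hΦ _ _ (h hs _ ht), fun h _ hs _ ht => hΦ _ _ (h ht _ hs)⟩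

lemma perpB_sup (S T : Submodule k V) : perpB Φ (S ⊔ T) = perpB Φ S ⊓ perpB Φ T := by
  refine le_antisymm (le_inf (perpB_anti le_sup_left) (perpB_anti le_sup_right)) ?_
  rintro v ⟨hvS, hvT⟩ _ hu
  obtain ⟨s, hs, t, ht, rfl⟩ := Submodule.mem_sup.1 hu
  rw [map_add, LinearMap.add_apply, hvS s hs, hvT t ht, add_zero]

lemma sup_span_singleton_le_perpB (hΦ : LinearMap.IsAlt Φ) {S : Submodule k V}
    (hS : S ≤ perpB Φ S) {v : V} (hv : v ∈ perpB Φ S) : S ⊔ k ∙ v ≤ perpB Φ (S ⊔ k ∙ v) := by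
  have hvS : k ∙ v ≤ perpB Φ S := (Submodule.span_singleton_le_iff_mem v _).2 hv
  have hvv : k ∙ v ≤ perpB Φ (k ∙ v) := by
    rw [Submodule.span_singleton_le_iff_mem]
    intro u hu
    obtain ⟨c, rfl⟩ := Submodule.mem_span_singleton.1 hu
    rw [map_smul, LinearMap.smul_apply, hΦ v, smul_zero]
  rw [perpB_sup]
  exact sup_le (le_inf hS ((le_perpB_comm hΦ.isRefl).1 hvS)) (le_inf hvS hvv)

variable [FiniteDimensional k V]

lemma finrank_perpB_add_finrank (hΦ : LinearMap.Nondegenerate Φ) (S : Submodule k V) :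
    finrank k (perpB Φ S) + finrank k S = finrank k V := by
  rw [perpB_eq_orthogonal, LinearMap.BilinForm.finrank_orthogonal hΦ]
  exact Nat.sub_add_cancel S.finrank_le

lemma perpB_perpB (hΦ : LinearMap.Nondegenerate Φ) (hrefl : LinearMap.IsRefl Φ)
    (S : Submodule k V) : perpB Φ (perpB Φ S) = S :=
  LinearMap.BilinForm.orthogonal_orthogonal hΦ hrefl S

lemma finrank_perpB_inf_perpB_add_finrank (hΦ : LinearMap.Nondegenerate Φ)
    (S T : Submodule k V) :
    finrank k ↥(perpB Φ S ⊓ perpB Φ T) + finrank k S =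
      finrank k (perpB Φ T) + finrank k ↥(S ⊓ T) := by
  have hsup := Submodule.finrank_sup_add_finrank_inf_eq S T
  have hperp := finrank_perpB_add_finrank hΦ (S ⊔ T)
  have hperpT := finrank_perpB_add_finrank hΦ T
  rw [perpB_sup] at hperp
  omega

end Orthogonal

section Flags

variable {k V : Type*} [Field k] [AddCommGroup V] [Module k V] {Φ : V →ₗ[k] V →ₗ[k] k} {n : ℕ}
  {M : ℕ → Submodule k V}

lemma IsFlag.monotone (hM : IsFlag Φ n M) : Monotone M := monotone_nat_of_le_succ hM.2.1

lemma IsFlag.inf_last (hM : IsFlag Φ n M) (S : Submodule k V) : S ⊓ M n = S := by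
  rw [hM.2.2.1 n le_rfl, inf_top_eq]

lemma IsFlag.perpB_eq (hM : IsFlag Φ n M) {j : ℕ} (hj : j ≤ n) : perpB Φ (M j) = M (n - j) :=
  (hM.2.2.2 j hj).symm

lemma IsFlag.finrank_perpB_inf_add_finrank [FiniteDimensional k V] (hM : IsFlag Φ n M)
    (hΦ : LinearMap.Nondegenerate Φ) (S : Submodule k V) {j : ℕ} (hj : j ≤ n) :
    finrank k ↥(perpB Φ S ⊓ M j) + finrank k S =
      finrank k (M j) + finrank k ↥(S ⊓ M (n - j)) := by
  have := finrank_perpB_inf_perpB_add_finrank hΦ S (M (n - j))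
  rwa [hM.perpB_eq (Nat.sub_le n j), Nat.sub_sub_self hj] at this

end Flags

section Counting

/-- The jump function of `S^⊥ / S` for an isotropic `S` which has an isotropic extension `U` such
that `U / S` has jump function `t` and `U^⊥ / U` has jump function `a`. -/
def perpJumps (n : ℕ) (a : ℕ → ℤ) (t : ℕ → ℕ) (x : ℕ) : ℤ := a x + t x + t (n + 1 - x)

lemma sum_add_single (t : ℕ → ℕ) {u : ℕ} (hu : 1 ≤ u) (j : ℕ) :
    ∑ x ∈ Icc 1 j, (t + Pi.single u 1 : ℕ → ℕ) x = ∑ x ∈ Icc 1 j, t x + if u ≤ j then 1 else 0 := by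
  simp [sum_add_distrib, Finset.sum_pi_single', hu]

lemma sum_Icc_add_sum_reflect (t : ℕ → ℕ) {n j : ℕ} (hj : j ≤ n) :
    ∑ x ∈ Icc 1 (n - j), t x + ∑ x ∈ Icc 1 j, t (n + 1 - x) = ∑ x ∈ Icc 1 n, t x := by
  have hreflect : ∑ x ∈ Icc 1 j, t (n + 1 - x) = ∑ x ∈ Icc 1 n with n - j < x, t x :=
    sum_nbij' (n + 1 - ·) (n + 1 - ·) (by grind) (by grind) (by grind) (by grind) (by grind)
  have hprefix : ∑ x ∈ Icc 1 (n - j), t x = ∑ x ∈ Icc 1 n with ¬ n - j < x, t x :=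
    sum_congr (by grind) fun _ _ => rfl
  rw [hreflect, hprefix, add_comm, sum_filter_add_sum_filter_not]

lemma sum_perpJumps_add_single (a : ℕ → ℤ) (t : ℕ → ℕ) {n u j : ℕ} (hu : u ∈ Icc 1 n)
    (hj : j ≤ n) :
    ∑ x ∈ Icc 1 j, perpJumps n a (t + Pi.single u 1) x =
      ∑ x ∈ Icc 1 j, perpJumps n a t x + (if u ≤ j then 1 else 0) +
        (if n - j < u then 1 else 0) := by
  rw [mem_Icc] at hu
  have hreflect : ∀ x ∈ Icc 1 j,
      (Pi.single u 1 : ℕ → ℕ) (n + 1 - x) = (Pi.single (n + 1 - u) 1 : ℕ → ℕ) x := by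
    intro x hx
    rw [mem_Icc] at hx
    simp only [Pi.single_apply]
    congr 1
    simp only [eq_iff_iff]
    omega
  have hterm : ∀ x ∈ Icc 1 j, perpJumps n a (t + Pi.single u 1) x =
      perpJumps n a t x +
        ((Pi.single u 1 : ℕ → ℕ) x + (Pi.single (n + 1 - u) 1 : ℕ → ℕ) x : ℕ) := by
    intro x hx
    simp only [perpJumps, Pi.add_apply, hreflect x hx]
    push_cast
    ring
  have hmem : n + 1 - u ∈ Icc 1 j ↔ n - j < u := by rw [mem_Icc]; omega
  rw [sum_congr rfl hterm, sum_add_distrib, ← Nat.cast_sum, sum_add_distrib]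
  simp only [sum_pi_single', hmem, mem_Icc, hu.1, true_and]
  push_cast
  ring

lemma ncard_mul_eq_ncard_mul {α β : Type*} [Finite α] [Finite β] (R : α → β → Prop) {s : Set α}
    {t : Set β} {c e : ℚ} (hs : ∀ a ∈ s, ({b ∈ t | R a b}.ncard : ℚ) = c)
    (ht : ∀ b ∈ t, ({a ∈ s | R a b}.ncard : ℚ) = e) : s.ncard * c = t.ncard * e := by
  have := Fintype.ofFinite α
  have := Fintype.ofFinite β
  simp only [Set.ncard_eq_toFinset_card', Set.toFinset_ofPred] at hs ht ⊢
  calc (#s.toFinset : ℚ) * c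
      = ∑ a ∈ s.toFinset, (#{b ∈ t.toFinset | R a b} : ℚ) := by
        rw [← nsmul_eq_mul, ← sum_const]
        refine sum_congr rfl fun a ha => ?_
        rw [← hs a (Set.mem_toFinset.1 ha)]
        congr 2
        ext b
        simp
    _ = ∑ b ∈ t.toFinset, (#{a ∈ s.toFinset | R a b} : ℚ) :=
        mod_cast sum_card_bipartiteAbove_eq_sum_card_bipartiteBelow R
    _ = #t.toFinset * e := by
        rw [← nsmul_eq_mul, ← sum_const]
        refine sum_congr rfl fun b hb => ?_
        rw [← ht b (Set.mem_toFinset.1 hb)]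
        congr 2
        ext a
        simp

variable {k V : Type*} [Field k] [AddCommGroup V] [Module k V]

/-- The isotropic subspaces `U ⊇ S` such that, for the filtration of `U / S` induced by `M`, the
`x`-th step has dimension `t x` for `1 ≤ x ≤ n`. -/
def isotropicExtensions (Φ : V →ₗ[k] V →ₗ[k] k) (n : ℕ) (M : ℕ → Submodule k V)
    (S : Submodule k V) (t : ℕ → ℕ) : Set (Submodule k V) :=
  {U | S ≤ U ∧ U ≤ perpB Φ U ∧
    ∀ j ≤ n, finrank k ↥(U ⊓ M j) = finrank k ↥(S ⊓ M j) + ∑ x ∈ Icc 1 j, t x}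

/-- For the filtration of `S^⊥ / S` induced by `M`, the `x`-th step has dimension `b x`
for `1 ≤ x ≤ n`. -/
def HasPerpJumps (Φ : V →ₗ[k] V →ₗ[k] k) (n : ℕ) (M : ℕ → Submodule k V)
    (S : Submodule k V) (b : ℕ → ℤ) : Prop :=
  ∀ j ≤ n, (finrank k ↥(perpB Φ S ⊓ M j) : ℤ) = finrank k ↥(S ⊓ M j) + ∑ x ∈ Icc 1 j, b x

variable {Φ : V →ₗ[k] V →ₗ[k] k} {n : ℕ} {M : ℕ → Submodule k V} {S : Submodule k V}
  {a : ℕ → ℤ} {t : ℕ → ℕ} {u : ℕ}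

variable [FiniteDimensional k V]

lemma isotropicExtensions_zero (hM : IsFlag Φ n M) (hS : S ≤ perpB Φ S) :
    isotropicExtensions Φ n M S 0 = {S} := by
  ext U
  refine ⟨fun ⟨hSU, _, hdim⟩ => ?_, ?_⟩
  · have := hdim n le_rfl
    simp only [Pi.zero_apply, sum_const_zero, add_zero] at this
    rw [hM.inf_last, hM.inf_last] at this
    exact (Submodule.eq_of_le_of_finrank_eq hSU this.symm).symm
  · rintro rfl
    exact ⟨le_rfl, hS, fun j _ => by simp⟩

lemma HasPerpJumps.sup_span_singleton (hM : IsFlag Φ n M) (hΦ : LinearMap.Nondegenerate Φ)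
    (hu : u ∈ Icc 1 n) (h : HasPerpJumps Φ n M S (perpJumps n a (t + Pi.single u 1))) {v : V}
    (hvM : v ∈ M u) (hv : v ∉ M (u - 1) ⊔ S) :
    HasPerpJumps Φ n M (S ⊔ k ∙ v) (perpJumps n a t) := by
  intro j hj
  have hstep := finrank_sup_span_singleton_inf_of_mem_sdiff hM.monotone hvM hv
  have htop := hstep n
  rw [hM.inf_last, hM.inf_last, if_pos (mem_Icc.1 hu).2] at htop
  have hS := hM.finrank_perpB_inf_add_finrank hΦ S hj
  have hS' := hM.finrank_perpB_inf_add_finrank hΦ (S ⊔ k ∙ v) hj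
  have hjumps := h j hj
  rw [sum_perpJumps_add_single a t hu hj] at hjumps
  have hj' := hstep (n - j)
  have hj := hstep j
  split_ifs at hjumps hj hj' <;> omega

lemma sep_mem_isotropicExtensions (hM : IsFlag Φ n M) (hu : 1 ≤ u) {v : V} (hvM : v ∈ M u)
    (hv : v ∉ M (u - 1) ⊔ S) :
    {U ∈ isotropicExtensions Φ n M S (t + Pi.single u 1) | v ∈ U} =
      isotropicExtensions Φ n M (S ⊔ k ∙ v) t := by
  ext U
  simp only [isotropicExtensions, Set.mem_ofPred_eq, sup_le_iff,
    Submodule.span_singleton_le_iff_mem, sum_add_single t hu, add_assoc,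
    finrank_sup_span_singleton_inf_of_mem_sdiff hM.monotone hvM hv,
    add_comm (if u ≤ _ then 1 else 0)]
  tauto

/-- The vectors which can be adjoined to an isotropic `S` in order to raise the `u`-th step of
its filtration by one. -/
def liftVectors (Φ : V →ₗ[k] V →ₗ[k] k) (M : ℕ → Submodule k V) (S : Submodule k V) (u : ℕ) :
    Set V :=
  ↑(M u ⊓ perpB Φ S) \ ↑(M (u - 1) ⊔ S)

omit [FiniteDimensional k V] in
lemma sep_mem_liftVectors {U : Submodule k V} (hSU : S ≤ U) (hU : U ≤ perpB Φ U) :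
    {v ∈ liftVectors Φ M S u | v ∈ U} = ↑(M u ⊓ U) \ ↑(M (u - 1) ⊔ S) := by
  have hUS : U ≤ perpB Φ S := hU.trans (perpB_anti hSU)
  ext v
  simp only [liftVectors, Set.mem_sdiff, SetLike.mem_coe, Set.mem_ofPred_eq, Submodule.mem_inf]
  have := @hUS v
  tauto

variable [Finite k]

lemma ncard_liftVectors (hM : Monotone M) (hS : S ≤ perpB Φ S) {b : ℕ → ℤ}
    (h : HasPerpJumps Φ n M S b) (hu : u ∈ Icc 1 n) :
    ((liftVectors Φ M S u).ncard : ℚ) =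
      (Nat.card k : ℚ) ^ (finrank k ↥(S ⊓ M u) + ∑ x ∈ Icc 1 u, b x) -
        (Nat.card k : ℚ) ^ (finrank k ↥(S ⊓ M u) + ∑ x ∈ Icc 1 (u - 1), b x) := by
  rw [mem_Icc] at hu
  have hmod := finrank_inf_inf_sup_add_finrank_inf (hM (Nat.sub_le u 1)) hS
  have htop := h u hu.2
  have hprev := h (u - 1) (by omega)
  rw [inf_comm] at htop hprev
  rw [liftVectors, ncard_sdiff_eq_pow_sub_pow, ← zpow_natCast, ← zpow_natCast]
  congr 2
  all_goals omega

lemma ncard_sep_mem_liftVectors (hM : Monotone M) (hu : u ∈ Icc 1 n) {U : Submodule k V}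
    (hU : U ∈ isotropicExtensions Φ n M S t) :
    ({v ∈ liftVectors Φ M S u | v ∈ U}.ncard : ℚ) =
      (Nat.card k : ℚ) ^ (finrank k ↥(S ⊓ M u) + ∑ x ∈ Icc 1 u, t x) -
        (Nat.card k : ℚ) ^ (finrank k ↥(S ⊓ M u) + ∑ x ∈ Icc 1 (u - 1), t x) := by
  obtain ⟨hSU, hUiso, hdim⟩ := hU
  rw [mem_Icc] at hu
  have hmod := finrank_inf_inf_sup_add_finrank_inf (hM (Nat.sub_le u 1)) hSU
  have htop := hdim u hu.2
  have hprev := hdim (u - 1) (by omega)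
  rw [inf_comm] at htop hprev
  rw [sep_mem_liftVectors hSU hUiso, ncard_sdiff_eq_pow_sub_pow]
  congr 2
  all_goals omega

/-- The number of isotropic extensions with jump function `t` gets multiplied by this factor when
`t u` is raised by one to its present value; here `t` vanishes above `u`. -/
def stepFactor (q : ℚ) (n : ℕ) (a : ℕ → ℤ) (t : ℕ → ℕ) (u : ℕ) : ℚ :=
  q ^ (∑ x ∈ Icc 1 (u - 1), (a x + t (n + 1 - x))) *
    ((q ^ (a u + t u + t (n + 1 - u)) - 1) / (q ^ (t u : ℤ) - 1))

lemma zpow_perpJumps_sub_zpow {q : ℚ} (hq : 1 < q) (s : ℕ) (n : ℕ) (a : ℕ → ℤ) (t : ℕ → ℕ)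
    (hu : 1 ≤ u) (htu : t u ≠ 0) :
    q ^ (s + ∑ x ∈ Icc 1 u, perpJumps n a t x) - q ^ (s + ∑ x ∈ Icc 1 (u - 1), perpJumps n a t x) =
      stepFactor q n a t u *
        (q ^ (s + ∑ x ∈ Icc 1 u, t x) - q ^ (s + ∑ x ∈ Icc 1 (u - 1), t x)) := by
  obtain ⟨w, rfl⟩ := Nat.exists_eq_add_of_le' hu
  have hq0 : q ≠ 0 := by positivity
  have hden : q ^ t (w + 1) - 1 ≠ 0 := (sub_pos.2 (one_lt_pow₀ hq htu)).ne'
  have hsum : ∑ x ∈ Icc 1 w, perpJumps n a t x =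
      ∑ x ∈ Icc 1 w, (a x + t (n + 1 - x)) + (∑ x ∈ Icc 1 w, t x : ℕ) := by
    push_cast
    rw [← sum_add_distrib]
    exact sum_congr rfl fun x _ => by rw [perpJumps]; ring
  rw [sum_Icc_succ_top hu, sum_Icc_succ_top hu, stepFactor, Nat.add_sub_cancel, hsum, perpJumps]
  simp only [zpow_add₀ hq0, zpow_natCast, pow_add]
  field_simp

lemma ncard_isotropicExtensions_add_single (hM : IsFlag Φ n M) (hS : S ≤ perpB Φ S)
    (hu : u ∈ Icc 1 n) (h : HasPerpJumps Φ n M S (perpJumps n a (t + Pi.single u 1))) {c : ℚ}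
    (hc : ∀ v ∈ liftVectors Φ M S u, ((isotropicExtensions Φ n M (S ⊔ k ∙ v) t).ncard : ℚ) = c) :
    ((isotropicExtensions Φ n M S (t + Pi.single u 1)).ncard : ℚ) =
      stepFactor (Nat.card k) n a (t + Pi.single u 1) u * c := by
  have : Finite V := Module.finite_of_finite k
  have hq : (1 : ℚ) < Nat.card k := mod_cast Finite.one_lt_card
  have hu1 : 1 ≤ u := (mem_Icc.1 hu).1
  have hcount := ncard_mul_eq_ncard_mul (fun v U => v ∈ U)
    (fun v hv => by rw [sep_mem_isotropicExtensions hM hu1 hv.1.1 hv.2]; exact hc v hv)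
    fun U hU => ncard_sep_mem_liftVectors hM.monotone hu hU
  rw [ncard_liftVectors hM.monotone hS h hu,
    zpow_perpJumps_sub_zpow hq _ n a _ hu1 (by simp)] at hcount
  refine mul_right_cancel₀ (sub_pos.2 (pow_lt_pow_right₀ hq ?_)).ne' (hcount.symm.trans (by ring))
  obtain ⟨w, rfl⟩ := Nat.exists_eq_add_of_le' hu1
  simp [sum_Icc_succ_top hu1]

end Counting

section Evaluation

variable {q : ℚ} {r n u : ℕ} {a : ℕ → ℤ} {t : ℕ → ℕ}

lemma qbinom_add_natCast (q : ℚ) (m : ℤ) (s : ℕ) :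
    qbinom q (m + s) s = ∏ i ∈ Icc 1 s, (q ^ (m + i) - 1) / (q ^ (i : ℤ) - 1) := by
  rw [qbinom, prod_div_distrib, prod_div_distrib]
  congr 1
  refine prod_nbij' (s + 1 - ·) (s + 1 - ·) (by grind) (by grind) (by grind) (by grind) ?_
  intro i hi
  rw [mem_Icc] at hi
  rw [Nat.cast_sub (by omega)]
  push_cast
  ring_nf

lemma qbinom_add_natCast_succ (q : ℚ) (m : ℤ) (s : ℕ) :
    qbinom q (m + (s + 1 : ℕ)) (s + 1) =
      qbinom q (m + s) s * ((q ^ (m + (s + 1 : ℕ)) - 1) / (q ^ ((s + 1 : ℕ) : ℤ) - 1)) := by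
  rw [qbinom_add_natCast, qbinom_add_natCast, prod_Icc_succ_top (by omega)]

lemma qint_div_qint (hq : q ≠ 1) (m m' : ℤ) :
    qint q m / qint q m' = (q ^ m - 1) / (q ^ m' - 1) :=
  div_div_div_cancel_right₀ (sub_ne_zero.2 hq) _ _

lemma sum_Ioo_add_single (t : ℕ → ℕ) (w u : ℕ) :
    ∑ x ∈ Ioo w u, (t + Pi.single u 1 : ℕ → ℕ) x = ∑ x ∈ Ioo w u, t x := by
  simp [sum_add_distrib, sum_pi_single']

lemma sum_reflect_eq_sum_Ioo (hu : u ∈ Icc 1 n) (ht : ∀ x, u < x → t x = 0) :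
    ∑ x ∈ Icc 1 (u - 1), t (n + 1 - x) =
      ∑ x ∈ Ioo (n + 1 - u) u, t x + if n + 1 - u < u then t u else 0 := by
  rw [mem_Icc] at hu
  have hreflect : ∑ x ∈ Icc 1 (u - 1), t (n + 1 - x) = ∑ x ∈ Ioc (n + 1 - u) n, t x :=
    sum_nbij' (n + 1 - ·) (n + 1 - ·) (by grind) (by grind) (by grind) (by grind) (by simp)
  have hsupp : ∑ x ∈ Ioc (n + 1 - u) n, t x = ∑ x ∈ Ioc (n + 1 - u) u, t x :=
    (sum_subset (Ioc_subset_Ioc_right hu.2) (by grind)).symm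
  rw [hreflect, hsupp]
  split_ifs with h
  · rw [← Ioo_insert_right h, sum_insert (by simp), add_comm]
  · rw [Ioc_eq_empty h, Ioo_eq_empty h, add_zero]

lemma stepFactor_add_single (hu : u ∈ Icc 1 n) (ht : ∀ x, u < x → t x = 0) :
    stepFactor q n a (t + Pi.single u 1) u =
      q ^ (∑ j ∈ Icc 1 (u - 1), a j + (∑ j ∈ Ioo (n + 1 - u) u, t j : ℕ) +
          if n + 1 - u < u then (t u : ℤ) + 1 else 0) *
        ((q ^ (a u + (t u + 1 : ℕ) + (t (n + 1 - u) + if n + 1 - u = u then 1 else 0 : ℕ)) - 1) /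
          (q ^ ((t u + 1 : ℕ) : ℤ) - 1)) := by
  have hreflect := sum_reflect_eq_sum_Ioo (t := t + Pi.single u 1) hu fun x hx => by
    simp [ht x hx, hx.ne']
  rw [stepFactor, sum_add_distrib, ← Nat.cast_sum, hreflect, sum_Ioo_add_single]
  simp [Pi.single_apply, add_assoc]

/-- The contribution of `t u` to the exponent `N(t)` in the multiplication formula, where `a` is
row `r + 1` of the matrix. -/
def levelExponent (r : ℕ) (a : ℕ → ℤ) (t : ℕ → ℕ) (u : ℕ) : ℤ :=
  t u * ∑ j ∈ Icc 1 (u - 1), a j + (t u * ∑ j ∈ Ioo (2 * r + 2 - u) u, t j : ℕ) +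
    if r + 1 < u then (t u : ℤ) * (t u + 1) / 2 else 0

/-- The Gaussian binomial at column `u` in the multiplication formula, where `a` is row `r + 1` of
the matrix; in the middle column it is replaced by a product of quotients of quantum integers. -/
def levelBinom (q : ℚ) (r : ℕ) (a : ℕ → ℤ) (t : ℕ → ℕ) (u : ℕ) : ℚ :=
  if u < r + 1 then qbinom q (a u + t u) (t u)
  else if r + 1 < u then qbinom q (a u + t u + t (2 * r + 2 - u)) (t u)
  else ∏ i ∈ Icc 1 (t u), qint q (a u + 2 * (i : ℤ)) / qint q i

/-- The contribution of `t u` to the coefficient in the multiplication formula, where `a` is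
row `r + 1` of the matrix. -/
def levelFactor (q : ℚ) (r : ℕ) (a : ℕ → ℤ) (t : ℕ → ℕ) (u : ℕ) : ℚ :=
  q ^ levelExponent r a t u * levelBinom q r a t u

lemma levelFactor_of_eq_zero (h : t u = 0) : levelFactor q r a t u = 1 := by
  simp [levelFactor, levelExponent, levelBinom, h, qbinom]

lemma levelFactor_congr {s : ℕ → ℕ} (h : ∀ x ≤ u, s x = t x) :
    levelFactor q r a s u = levelFactor q r a t u := by
  have hsum : ∑ j ∈ Ioo (2 * r + 2 - u) u, s j = ∑ j ∈ Ioo (2 * r + 2 - u) u, t j :=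
    sum_congr rfl fun x hx => h x (mem_Ioo.1 hx).2.le
  have hbinom : levelBinom q r a s u = levelBinom q r a t u := by
    rw [levelBinom, levelBinom, h u le_rfl]
    split_ifs with _ hu
    · rfl
    · rw [h _ (by omega)]
    · rfl
  rw [levelFactor, levelFactor, levelExponent, levelExponent, hsum, h u le_rfl, hbinom]

lemma levelExponent_add_single :
    levelExponent r a (t + Pi.single u 1) u = levelExponent r a t u +
      (∑ j ∈ Icc 1 (u - 1), a j + (∑ j ∈ Ioo (2 * r + 2 - u) u, t j : ℕ) +
        if r + 1 < u then (t u : ℤ) + 1 else 0) := by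
  have htri (s : ℤ) : (s + 1) * (s + 1 + 1) / 2 = s * (s + 1) / 2 + (s + 1) := by
    rw [← Int.add_mul_ediv_right _ _ two_ne_zero]
    ring_nf
  rw [levelExponent, levelExponent, sum_Ioo_add_single]
  simp only [Pi.add_apply, Pi.single_eq_same]
  push_cast
  rw [htri]
  split_ifs <;> ring

lemma levelBinom_add_single (hq : q ≠ 1) (ht : ∀ x, u < x → t x = 0) :
    levelBinom q r a (t + Pi.single u 1) u = levelBinom q r a t u *
      ((q ^ (a u + (t u + 1 : ℕ) +
          (t (2 * r + 2 - u) + if 2 * r + 2 - u = u then 1 else 0 : ℕ)) - 1) /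
        (q ^ ((t u + 1 : ℕ) : ℤ) - 1)) := by
  have hu' : (t + Pi.single u 1 : ℕ → ℕ) u = t u + 1 := by simp
  rw [levelBinom, levelBinom, hu']
  rcases lt_trichotomy u (r + 1) with h | rfl | h
  · rw [if_pos h, if_pos h, ht (2 * r + 2 - u) (by omega), if_neg (by omega),
      qbinom_add_natCast_succ, add_zero, Nat.cast_zero, add_zero]
  · rw [if_neg (lt_irrefl _), if_neg (lt_irrefl _), if_neg (lt_irrefl _), if_neg (lt_irrefl _),
      prod_Icc_succ_top (by omega), qint_div_qint hq, show 2 * r + 2 - (r + 1) = r + 1 by omega,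
      if_pos rfl, add_assoc (a _), ← Nat.cast_add, ← two_mul]
    push_cast
    rfl
  · have hne : 2 * r + 2 - u ≠ u := by omega
    have hsingle : (t + Pi.single u 1 : ℕ → ℕ) (2 * r + 2 - u) = t (2 * r + 2 - u) := by
      simp [hne]
    rw [if_neg h.not_gt, if_neg h.not_gt, if_pos h, if_pos h, hsingle, if_neg hne, add_zero,
      add_right_comm _ ((t u + 1 : ℕ) : ℤ), add_right_comm _ (t u : ℤ), qbinom_add_natCast_succ]

lemma levelFactor_add_single (hq : 1 < q) (hu : u ∈ Icc 1 (2 * r + 1))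
    (ht : ∀ x, u < x → t x = 0) :
    levelFactor q r a (t + Pi.single u 1) u =
      stepFactor q (2 * r + 1) a (t + Pi.single u 1) u * levelFactor q r a t u := by
  have hlt : 2 * r + 2 - u < u ↔ r + 1 < u := by omega
  rw [stepFactor_add_single hu ht, levelFactor, levelFactor, levelExponent_add_single,
    levelBinom_add_single hq.ne' ht, zpow_add₀ (by positivity)]
  simp only [show 2 * r + 1 + 1 = 2 * r + 2 from rfl, hlt]
  ring

lemma prod_levelFactor_add_single (hq : 1 < q) (hu : u ∈ Icc 1 (2 * r + 1))
    (ht : ∀ x, u < x → t x = 0) :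
    ∏ x ∈ Icc 1 (2 * r + 1), levelFactor q r a (t + Pi.single u 1) x =
      stepFactor q (2 * r + 1) a (t + Pi.single u 1) u *
        ∏ x ∈ Icc 1 (2 * r + 1), levelFactor q r a t x := by
  rw [← mul_prod_erase _ _ hu, ← mul_prod_erase _ _ hu, levelFactor_add_single hq hu ht, mul_assoc]
  congr 2
  refine prod_congr rfl fun x hx => ?_
  rcases (ne_of_mem_erase hx).lt_or_gt with hxu | hux
  · exact levelFactor_congr fun y hy => by simp [(hy.trans_lt hxu).ne]
  · rw [levelFactor_of_eq_zero (by simp [ht x hux, hux.ne']), levelFactor_of_eq_zero (ht x hux)]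

lemma jump_induction {P : ∀ t : ℕ → ℕ, (∀ x, t x ≠ 0 → x ∈ Icc 1 n) → Prop}
    (zero : P 0 fun _ h => absurd rfl h)
    (add_single : ∀ t u ht ht', u ∈ Icc 1 n → (∀ x, u < x → t x = 0) → P t ht →
      P (t + Pi.single u 1) ht')
    (t : ℕ → ℕ) (ht : ∀ x, t x ≠ 0 → x ∈ Icc 1 n) : P t ht := by
  induction hN : ∑ x ∈ Icc 1 n, t x using Nat.strong_induction_on generalizing t with
  | h N ih =>
  by_cases hzero : ∀ x ∈ Icc 1 n, t x = 0
  · obtain rfl : t = 0 := funext fun x => not_not.1 fun hx => hx (hzero x (ht x hx))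
    exact zero
  push Not at hzero
  obtain ⟨u, hu, hmax⟩ := exists_max_image {x ∈ Icc 1 n | t x ≠ 0} id (filter_nonempty_iff.2 hzero)
  rw [mem_filter] at hu
  have hle : Pi.single u 1 ≤ t := fun x => by rw [Pi.single_apply]; grind
  obtain ⟨s, rfl⟩ : ∃ s : ℕ → ℕ, t = s + Pi.single u 1 :=
    ⟨t - Pi.single u 1, (tsub_add_cancel_of_le hle).symm⟩
  have hs (x) (hx : s x ≠ 0) : x ∈ Icc 1 n := ht x (by simp [hx])
  refine add_single s u hs ht hu.1 (fun x hux => ?_) (ih _ ?_ s hs rfl)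
  · by_contra hx
    exact (hmax x (mem_filter.2 ⟨hs x hx, by simp [hx]⟩)).not_gt hux
  · simp [← hN, sum_add_distrib, sum_pi_single', hu.1]

end Evaluation

theorem ncard_isotropicExtensions {k V : Type*} [Field k] [Finite k] [AddCommGroup V] [Module k V]
    [FiniteDimensional k V] {Φ : V →ₗ[k] V →ₗ[k] k} (halt : LinearMap.IsAlt Φ)
    (hΦ : LinearMap.Nondegenerate Φ) {r : ℕ} {M : ℕ → Submodule k V}
    (hM : IsFlag Φ (2 * r + 1) M) {a : ℕ → ℤ} (t : ℕ → ℕ)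
    (ht : ∀ u, t u ≠ 0 → u ∈ Icc 1 (2 * r + 1)) {S : Submodule k V} (hS : S ≤ perpB Φ S)
    (h : HasPerpJumps Φ (2 * r + 1) M S (perpJumps (2 * r + 1) a t)) :
    ((isotropicExtensions Φ (2 * r + 1) M S t).ncard : ℚ) =
      ∏ u ∈ Icc 1 (2 * r + 1), levelFactor (Nat.card k) r a t u := by
  have hq : (1 : ℚ) < Nat.card k := mod_cast Finite.one_lt_card
  induction t, ht using jump_induction generalizing S with
  | zero => simp [isotropicExtensions_zero hM hS, levelFactor_of_eq_zero]
  | add_single t u _ _ hu htu ih =>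
    rw [prod_levelFactor_add_single hq hu htu]
    exact ncard_isotropicExtensions_add_single hM hS hu h fun v hv =>
      ih (sup_span_singleton_le_perpB halt hS hv.1.2) (h.sup_span_singleton hM hΦ hu hv.1.1 hv.2)

section Coefficient

/-- The coefficient of the summand indexed by `t` in the multiplication formula, where `a` is
row `r + 1` of the matrix. -/
def jumpCoeff (q : ℚ) (r : ℕ) (a : ℕ → ℤ) (t : ℕ → ℕ) : ℚ :=
  q ^ ((∑ j ∈ Icc 1 (2 * r + 1), ∑ u ∈ Icc 1 (2 * r + 1), if j < u then a j * (t u : ℤ) else 0) +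
      (∑ j ∈ Icc 1 (2 * r + 1), ∑ u ∈ Icc 1 (2 * r + 1),
        if (2 * r + 2 - j < u ∧ u < j) then (t u : ℤ) * (t j : ℤ) else 0) +
      (∑ u ∈ Icc 1 (2 * r + 1), if r + 1 < u then (t u : ℤ) * ((t u : ℤ) + 1) / 2 else 0)) *
    (∏ u ∈ (Icc 1 (2 * r + 1)).filter (fun u => u < r + 1), qbinom q (a u + (t u : ℤ)) (t u)) *
    (∏ u ∈ (Icc 1 (2 * r + 1)).filter (fun u => r + 1 < u),
      qbinom q (a u + (t u : ℤ) + (t (2 * r + 2 - u) : ℤ)) (t u)) *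
    (∏ i ∈ Icc 1 (t (r + 1)), qint q (a (r + 1) + 2 * (i : ℤ)) / qint q (i : ℤ))

lemma sum_levelExponent (r : ℕ) (a : ℕ → ℤ) (t : ℕ → ℕ) :
    ∑ u ∈ Icc 1 (2 * r + 1), levelExponent r a t u =
      (∑ j ∈ Icc 1 (2 * r + 1), ∑ u ∈ Icc 1 (2 * r + 1), if j < u then a j * (t u : ℤ) else 0) +
      (∑ j ∈ Icc 1 (2 * r + 1), ∑ u ∈ Icc 1 (2 * r + 1),
        if (2 * r + 2 - j < u ∧ u < j) then (t u : ℤ) * (t j : ℤ) else 0) +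
      (∑ u ∈ Icc 1 (2 * r + 1), if r + 1 < u then (t u : ℤ) * ((t u : ℤ) + 1) / 2 else 0) := by
  simp only [levelExponent, sum_add_distrib]
  congr 2
  · rw [sum_comm]
    refine sum_congr rfl fun u hu => ?_
    rw [← sum_filter, mul_sum]
    exact sum_congr (by grind) fun j _ => mul_comm _ _
  · refine sum_congr rfl fun u hu => ?_
    rw [← sum_filter]
    push_cast
    rw [mul_sum]
    exact sum_congr (by grind) fun j _ => mul_comm _ _

lemma prod_levelBinom (q : ℚ) (r : ℕ) (a : ℕ → ℤ) (t : ℕ → ℕ) :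
    ∏ u ∈ Icc 1 (2 * r + 1), levelBinom q r a t u =
      (∏ u ∈ Icc 1 (2 * r + 1) with u < r + 1, qbinom q (a u + t u) (t u)) *
      (∏ u ∈ Icc 1 (2 * r + 1) with r + 1 < u,
        qbinom q (a u + t u + t (2 * r + 2 - u)) (t u)) *
      (∏ i ∈ Icc 1 (t (r + 1)), qint q (a (r + 1) + 2 * (i : ℤ)) / qint q i) := by
  have hmid : r + 1 ∈ Icc 1 (2 * r + 1) := mem_Icc.2 (by omega)
  have hsplit (u : ℕ) : levelBinom q r a t u =
      (if u < r + 1 then qbinom q (a u + t u) (t u) else 1) *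
      (if r + 1 < u then qbinom q (a u + t u + t (2 * r + 2 - u)) (t u) else 1) *
      (if u = r + 1 then ∏ i ∈ Icc 1 (t u), qint q (a u + 2 * (i : ℤ)) / qint q i else 1) := by
    unfold levelBinom
    rcases lt_trichotomy u (r + 1) with h | rfl | h
    · simp [h, h.not_gt, h.ne]
    · simp
    · simp [h, h.not_gt, h.ne']
  simp only [hsplit, prod_mul_distrib, prod_filter, prod_ite_eq', if_pos hmid]

lemma prod_levelFactor {q : ℚ} (hq : q ≠ 0) (r : ℕ) (a : ℕ → ℤ) (t : ℕ → ℕ) :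
    ∏ u ∈ Icc 1 (2 * r + 1), levelFactor q r a t u = jumpCoeff q r a t := by
  have hpow (s : Finset ℕ) (e : ℕ → ℤ) : ∏ u ∈ s, q ^ e u = q ^ ∑ u ∈ s, e u := by
    induction s using Finset.cons_induction with
    | empty => simp
    | cons u s hu ih => rw [prod_cons, sum_cons, ih, zpow_add₀ hq]
  simp only [levelFactor, prod_mul_distrib]
  rw [hpow, sum_levelExponent, prod_levelBinom, jumpCoeff]
  ring

end Coefficient

section Matrices

/-- The sum of the entries of the upper left `i × j` block of `A`. -/
def blockSum (A : ℕ → ℕ → ℤ) (i j : ℕ) : ℤ := ∑ a ∈ Icc 1 i, ∑ b ∈ Icc 1 j, A a b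

lemma blockSum_succ_left (A : ℕ → ℕ → ℤ) (i j : ℕ) :
    blockSum A (i + 1) j = blockSum A i j + ∑ b ∈ Icc 1 j, A (i + 1) b :=
  sum_Icc_succ_top (by omega) _

lemma mixedDiff_eq_iff_eq_blockSum {f : ℕ → ℕ → ℤ} (hf₀ : ∀ i, f i 0 = 0) (h₀f : ∀ j, f 0 j = 0)
    {n : ℕ} {A : ℕ → ℕ → ℤ} :
    (∀ i ∈ Icc 1 n, ∀ j ∈ Icc 1 n,
      f i j - f (i - 1) j - f i (j - 1) + f (i - 1) (j - 1) = A i j) ↔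
    ∀ i ≤ n, ∀ j ≤ n, f i j = blockSum A i j := by
  constructor
  · intro h i hi
    induction i with
    | zero => simp [h₀f, blockSum]
    | succ i ihi =>
      intro j hj
      induction j with
      | zero => simp [hf₀, blockSum]
      | succ j ihj =>
        have hA := h (i + 1) (mem_Icc.2 (by omega)) (j + 1) (mem_Icc.2 (by omega))
        have hrow := ihj (by omega)
        rw [Nat.add_sub_cancel, Nat.add_sub_cancel] at hA
        rw [blockSum_succ_left] at hrow ⊢
        rw [sum_Icc_succ_top (by omega)]
        linarith [ihi (by omega) j (by omega), ihi (by omega) (j + 1) hj]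
  · intro h i hi j hj
    rw [mem_Icc] at hi hj
    obtain ⟨i, rfl⟩ := Nat.exists_eq_add_of_le' hi.1
    obtain ⟨j, rfl⟩ := Nat.exists_eq_add_of_le' hj.1
    rw [Nat.add_sub_cancel, Nat.add_sub_cancel, h (i + 1) hi.2 (j + 1) hj.2,
      h i (by omega) (j + 1) hj.2, h (i + 1) hi.2 j (by omega), h i (by omega) j (by omega),
      blockSum_succ_left, blockSum_succ_left, sum_Icc_succ_top (by omega)]
    ring

lemma blockSum_Eth {n a b : ℕ} (ha : a ∈ Icc 1 n) (hb : b ∈ Icc 1 n) (i j : ℕ) :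
    blockSum (Eth n a b) i j = (if a ≤ i ∧ b ≤ j then 1 else 0) +
      if n + 1 - a ≤ i ∧ n + 1 - b ≤ j then 1 else 0 := by
  have hunit {c d : ℕ} (hc : 1 ≤ c) (hd : 1 ≤ d) :
      blockSum (fun x y => if x = c ∧ y = d then 1 else 0) i j =
        if c ≤ i ∧ d ≤ j then 1 else 0 := by
    simp only [blockSum, ite_and, sum_ite_irrel, sum_ite_eq', sum_const_zero, mem_Icc, hc, hd,
      true_and]
  rw [mem_Icc] at ha hb
  rw [← hunit ha.1 hb.1, ← hunit (by omega) (by omega)]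
  simp only [blockSum, Eth, sum_add_distrib]

/-- The matrix `A - ∑ u, t u (E^θ_{r,u} - E^θ_{r+1,u})`. -/
def shift (r : ℕ) (A : ℕ → ℕ → ℤ) (t : ℕ → ℕ) : ℕ → ℕ → ℤ :=
  fun a b => A a b - ∑ u ∈ Icc 1 (2 * r + 1),
    (t u : ℤ) * (Eth (2 * r + 1) r u a b - Eth (2 * r + 1) (r + 1) u a b)

lemma shift_apply_row {r u : ℕ} (hu : u ∈ Icc 1 (2 * r + 1)) (A : ℕ → ℕ → ℤ) (t : ℕ → ℕ) :
    shift r A t r u = A r u - t u := by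
  have hterm : ∀ x ∈ Icc 1 (2 * r + 1), (t x : ℤ) * (Eth (2 * r + 1) r x r u -
      Eth (2 * r + 1) (r + 1) x r u) = if x = u then (t x : ℤ) else 0 := by
    intro x _
    unfold Eth
    grind
  rw [shift, sum_congr rfl hterm, sum_ite_eq', if_pos hu]

lemma blockSum_shift_eq_sum (r : ℕ) (A : ℕ → ℕ → ℤ) (t : ℕ → ℕ) (i j : ℕ) :
    blockSum (shift r A t) i j = blockSum A i j - ∑ u ∈ Icc 1 (2 * r + 1),
      (t u : ℤ) * (blockSum (Eth (2 * r + 1) r u) i j -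
        blockSum (Eth (2 * r + 1) (r + 1) u) i j) := by
  have hcomm (f : ℕ → ℕ → ℕ → ℤ) :
      ∑ a ∈ Icc 1 i, ∑ b ∈ Icc 1 j, ∑ u ∈ Icc 1 (2 * r + 1), f u a b =
        ∑ u ∈ Icc 1 (2 * r + 1), ∑ a ∈ Icc 1 i, ∑ b ∈ Icc 1 j, f u a b :=
    (sum_congr rfl fun _ _ => sum_comm).trans sum_comm
  simp only [blockSum, shift, sum_sub_distrib, hcomm, ← mul_sum]

lemma blockSum_shift {r : ℕ} (hr : 1 ≤ r) (A : ℕ → ℕ → ℤ) (t : ℕ → ℕ) {i j : ℕ}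
    (hj : j ≤ 2 * r + 1) :
    blockSum (shift r A t) i j = blockSum A i j -
      (if i = r then ∑ u ∈ Icc 1 j, (t u : ℤ) else 0) +
      if i = r + 1 then ∑ u ∈ Icc 1 j, (t (2 * r + 2 - u) : ℤ) else 0 := by
  have hr' : r ∈ Icc 1 (2 * r + 1) := mem_Icc.2 (by omega)
  have hr1 : r + 1 ∈ Icc 1 (2 * r + 1) := mem_Icc.2 (by omega)
  have hterm : ∀ u ∈ Icc 1 (2 * r + 1), (t u : ℤ) * (blockSum (Eth (2 * r + 1) r u) i j -
      blockSum (Eth (2 * r + 1) (r + 1) u) i j) =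
      (if i = r then if u ≤ j then (t u : ℤ) else 0 else 0) -
        if i = r + 1 then if 2 * r + 2 - u ≤ j then (t u : ℤ) else 0 else 0 := by
    intro u hu
    rw [blockSum_Eth hr' hu, blockSum_Eth hr1 hu]
    grind
  have hreflect : ∑ u ∈ Icc 1 (2 * r + 1), (if 2 * r + 2 - u ≤ j then (t u : ℤ) else 0) =
      ∑ u ∈ Icc 1 j, (t (2 * r + 2 - u) : ℤ) := by
    rw [← sum_filter]
    exact sum_nbij' (2 * r + 2 - ·) (2 * r + 2 - ·) (by grind) (by grind) (by grind) (by grind)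
      (by grind)
  have hprefix : ∑ u ∈ Icc 1 (2 * r + 1), (if u ≤ j then (t u : ℤ) else 0) =
      ∑ u ∈ Icc 1 j, (t u : ℤ) := by
    rw [← sum_filter]
    exact sum_congr (by grind) fun _ _ => rfl
  rw [blockSum_shift_eq_sum, sum_congr rfl hterm, sum_sub_distrib, sum_ite_irrel, sum_ite_irrel,
    hprefix, hreflect]
  simp only [sum_const_zero]
  ring

/-- The condition that the matrix `C - R • E^θ_{r+1,r}` is diagonal. -/
def IsDiagonalUpTo (r R : ℕ) (C : ℕ → ℕ → ℤ) : Prop :=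
  ∀ i ∈ Icc 1 (2 * r + 1), ∀ j ∈ Icc 1 (2 * r + 1), i ≠ j →
    C i j = (R : ℤ) * Eth (2 * r + 1) (r + 1) r i j

lemma IsDiagonalUpTo.blockSum_eq {r R : ℕ} (hr : 1 ≤ r) {C : ℕ → ℕ → ℤ}
    (hC : IsDiagonalUpTo r R C) {i j : ℕ} (hi : i ≤ 2 * r + 1) (hj : j ≤ 2 * r + 1) :
    blockSum C i j = ∑ x ∈ Icc 1 (min i j), C x x +
      R * ((if r + 1 ≤ i ∧ r ≤ j then 1 else 0) + if r + 1 ≤ i ∧ r + 2 ≤ j then 1 else 0) := by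
  have hentry : ∀ x ∈ Icc 1 i, ∀ y ∈ Icc 1 j,
      C x y = (if x = y then C x x else 0) + R * Eth (2 * r + 1) (r + 1) r x y := by
    intro x hx y hy
    rw [mem_Icc] at hx hy
    split_ifs with hxy
    · subst hxy
      unfold Eth
      rw [if_neg (by omega), if_neg (by omega), add_zero, mul_zero, add_zero]
    · rw [hC x (mem_Icc.2 (by omega)) y (mem_Icc.2 (by omega)) hxy, zero_add]
  have hdiag : ∑ x ∈ Icc 1 i, ∑ y ∈ Icc 1 j, (if x = y then C x x else 0) =
      ∑ x ∈ Icc 1 (min i j), C x x := by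
    simp only [sum_ite_eq]
    rw [← sum_filter]
    exact sum_congr (by grind) fun _ _ => rfl
  rw [blockSum, sum_congr rfl fun x hx => sum_congr rfl (hentry x hx)]
  simp only [sum_add_distrib, ← mul_sum]
  rw [hdiag, ← blockSum, blockSum_Eth (mem_Icc.2 (by omega)) (mem_Icc.2 (by omega)),
    show 2 * r + 1 + 1 - (r + 1) = r + 1 by omega, show 2 * r + 1 + 1 - r = r + 2 by omega]

lemma IsDiagonalUpTo.blockSum_last {r R : ℕ} (hr : 1 ≤ r) {C : ℕ → ℕ → ℤ}
    (hC : IsDiagonalUpTo r R C) {j : ℕ} (hj : j ≤ 2 * r + 1) :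
    blockSum C (2 * r + 1) j = ∑ x ∈ Icc 1 j, C x x +
      R * ((if r ≤ j then 1 else 0) + if r + 2 ≤ j then 1 else 0) := by
  rw [hC.blockSum_eq hr le_rfl hj, min_eq_right hj]
  simp only [show r + 1 ≤ 2 * r + 1 by omega, true_and]

end Matrices

section RelativePosition

variable {k V : Type*} [Field k] [AddCommGroup V] [Module k V] [FiniteDimensional k V]

lemma relDim_add_finrank_inf (P Q : Submodule k V) :
    relDim P Q + finrank k ↥(P ⊓ Q) = finrank k P := by
  rw [relDim, ← Submodule.map_comap_subtype, Submodule.finrank_map_subtype_eq]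
  exact Submodule.finrank_quotient_add_finrank _

lemma relDim_inf_sup {P' P Q' Q : Submodule k V} (hP : P' ≤ P) (hQ : Q' ≤ Q) :
    relDim (P ⊓ Q) (P' ⊓ Q ⊔ P ⊓ Q') + finrank k ↥(P' ⊓ Q) + finrank k ↥(P ⊓ Q') =
      finrank k ↥(P ⊓ Q) + finrank k ↥(P' ⊓ Q') := by
  have hle : P' ⊓ Q ⊔ P ⊓ Q' ≤ P ⊓ Q :=
    sup_le (inf_le_inf_right Q hP) (inf_le_inf_left P hQ)
  have hinf : (P' ⊓ Q) ⊓ (P ⊓ Q') = P' ⊓ Q' := by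
    rw [inf_inf_inf_comm, inf_eq_left.2 hP, inf_eq_right.2 hQ]
  have hrel := relDim_add_finrank_inf (P ⊓ Q) (P' ⊓ Q ⊔ P ⊓ Q')
  have hsup := Submodule.finrank_sup_add_finrank_inf_eq (P' ⊓ Q) (P ⊓ Q')
  rw [inf_eq_right.2 hle] at hrel
  rw [hinf] at hsup
  omega

/-- The condition `(L, M) ∈ O_A`. -/
def HasRelPos (n : ℕ) (A : ℕ → ℕ → ℤ) (L M : ℕ → Submodule k V) : Prop :=
  ∀ i ∈ Icc 1 n, ∀ j ∈ Icc 1 n,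
    (relDim (L i ⊓ M j) (L (i - 1) ⊓ M j ⊔ L i ⊓ M (j - 1)) : ℤ) = A i j

omit [FiniteDimensional k V] in
lemma eMat_apply (Φ : V →ₗ[k] V →ₗ[k] k) (n : ℕ) (A : ℕ → ℕ → ℤ)
    (LL : Flags Φ n × Flags Φ n) :
    eMat Φ n A LL = if HasRelPos n A LL.1.1 LL.2.1 then 1 else 0 := rfl

variable {n : ℕ} {A : ℕ → ℕ → ℤ} {L M : ℕ → Submodule k V}

omit [FiniteDimensional k V] in
lemma HasRelPos.nonneg (h : HasRelPos n A L M) {i j : ℕ} (hi : i ∈ Icc 1 n) (hj : j ∈ Icc 1 n) :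
    0 ≤ A i j :=
  h i hi j hj ▸ Int.natCast_nonneg _

lemma hasRelPos_iff_finrank_eq_blockSum (hL : Monotone L) (hM : Monotone M) (hL₀ : L 0 = ⊥)
    (hM₀ : M 0 = ⊥) :
    HasRelPos n A L M ↔
      ∀ i ≤ n, ∀ j ≤ n, (finrank k ↥(L i ⊓ M j) : ℤ) = blockSum A i j := by
  rw [← mixedDiff_eq_iff_eq_blockSum (f := fun i j => (finrank k ↥(L i ⊓ M j) : ℤ))
    (by simp [hM₀]) (by simp [hL₀])]
  refine forall₄_congr fun i _ j _ => ?_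
  have := relDim_inf_sup (hL (Nat.sub_le i 1)) (hM (Nat.sub_le j 1))
  omega

lemma exists_jumps (hM : Monotone M) (hM₀ : M 0 = ⊥) {S U : Submodule k V} (hSU : S ≤ U) (n : ℕ) :
    ∃ t : ℕ → ℕ, (∀ u, t u ≠ 0 → u ∈ Icc 1 n) ∧
      ∀ j ≤ n, finrank k ↥(U ⊓ M j) = finrank k ↥(S ⊓ M j) + ∑ x ∈ Icc 1 j, t x := by
  let g (j : ℕ) : ℕ := finrank k ↥(U ⊓ M j) - finrank k ↥(S ⊓ M j)
  have hg (j : ℕ) : finrank k ↥(U ⊓ M j) = finrank k ↥(S ⊓ M j) + g j :=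
    (Nat.add_sub_cancel' (Submodule.finrank_mono (inf_le_inf_right _ hSU))).symm
  have hg₀ : g 0 = 0 := by
    dsimp only [g]
    rw [hM₀, inf_bot_eq, inf_bot_eq, Nat.sub_self]
  have hg_succ (j : ℕ) : g j ≤ g (j + 1) := by
    have := relDim_inf_sup hSU (hM j.le_succ)
    have := hg j
    have := hg (j + 1)
    simp only [Nat.succ_eq_add_one] at *
    omega
  refine ⟨fun u => if u ∈ Icc 1 n then g u - g (u - 1) else 0, fun u hu => ?_, fun j hj => ?_⟩
  · exact of_not_not fun h => hu (if_neg h)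
  · rw [hg]
    congr 1
    induction j with
    | zero => simpa using hg₀
    | succ j ih =>
      rw [sum_Icc_succ_top (by omega), ← ih (by omega), if_pos (mem_Icc.2 (by omega)),
        Nat.add_sub_cancel, Nat.add_sub_cancel' (hg_succ j)]

end RelativePosition

section Enlargement

variable {k V : Type*} [Field k] [AddCommGroup V] [Module k V] {Φ : V →ₗ[k] V →ₗ[k] k} {r : ℕ}
  {L L' M : ℕ → Submodule k V}

lemma IsFlag.eq_of_eqOn_lt (hL : IsFlag Φ (2 * r + 1) L) (hL' : IsFlag Φ (2 * r + 1) L')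
    (h : ∀ i < r, L' i = L i) {i : ℕ} (hi : r + 1 < i) : L' i = L i := by
  rcases le_total (2 * r + 1) i with hn | hn
  · rw [hL.2.2.1 i hn, hL'.2.2.1 i hn]
  · rw [← Nat.sub_sub_self hn, ← hL.perpB_eq (Nat.sub_le _ i), ← hL'.perpB_eq (Nat.sub_le _ i),
      h _ (by omega)]

lemma IsFlag.perpB_middle (hL : IsFlag Φ (2 * r + 1) L) : perpB Φ (L r) = L (r + 1) := by
  rw [hL.perpB_eq (by omega)]
  congr 1
  omega

lemma IsFlag.le_perpB_middle (hL : IsFlag Φ (2 * r + 1) L) : L r ≤ perpB Φ (L r) :=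
  (hL.2.1 r).trans hL.perpB_middle.ge

/-- The flag obtained from a flag `L` with `2 r + 1` steps by replacing `L r` by `U` and
`L (r + 1)` by `U^⊥`. -/
def replaceMiddle (Φ : V →ₗ[k] V →ₗ[k] k) (r : ℕ) (L : ℕ → Submodule k V) (U : Submodule k V)
    (i : ℕ) : Submodule k V :=
  if i = r then U else if i = r + 1 then perpB Φ U else L i

lemma replaceMiddle_self (U : Submodule k V) : replaceMiddle Φ r L U r = U := if_pos rfl

lemma replaceMiddle_succ (U : Submodule k V) : replaceMiddle Φ r L U (r + 1) = perpB Φ U := by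
  rw [replaceMiddle, if_neg r.succ_ne_self, if_pos rfl]

lemma replaceMiddle_of_ne (U : Submodule k V) {i : ℕ} (hi : i ≠ r) (hi' : i ≠ r + 1) :
    replaceMiddle Φ r L U i = L i := by
  rw [replaceMiddle, if_neg hi, if_neg hi']

lemma IsFlag.eq_replaceMiddle (hL : IsFlag Φ (2 * r + 1) L) (hL' : IsFlag Φ (2 * r + 1) L')
    (h : ∀ i < r, L' i = L i) : L' = replaceMiddle Φ r L (L' r) := by
  funext i
  unfold replaceMiddle
  split_ifs with hi hi'
  · rw [hi]
  · rw [hi', hL'.perpB_middle]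
  · rcases lt_or_ge i r with hir | hir
    · exact h i hir
    · exact hL.eq_of_eqOn_lt hL' h (by omega)

lemma IsFlag.replaceMiddle [FiniteDimensional k V] (hΦ : LinearMap.Nondegenerate Φ)
    (hrefl : LinearMap.IsRefl Φ) (hr : 1 ≤ r) (hL : IsFlag Φ (2 * r + 1) L)
    {U : Submodule k V} (hLU : L r ≤ U) (hU : U ≤ perpB Φ U) :
    IsFlag Φ (2 * r + 1) (replaceMiddle Φ r L U) := by
  have hUL : perpB Φ U ≤ L (r + 1) := (perpB_anti hLU).trans hL.perpB_middle.le
  refine ⟨?_, fun i => ?_, fun i hi => ?_, fun i hi => ?_⟩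
  · rw [replaceMiddle_of_ne U (by omega) (by omega), hL.1]
  · rcases lt_trichotomy i r with hi | rfl | hi
    · rw [replaceMiddle_of_ne U hi.ne (by omega)]
      rcases (Nat.succ_le_of_lt hi).eq_or_lt with hi | hi
      · rw [← Nat.succ_eq_add_one, hi, replaceMiddle_self]
        exact (hL.monotone (by omega)).trans hLU
      · rw [replaceMiddle_of_ne U hi.ne (by omega)]
        exact hL.2.1 i
    · rw [replaceMiddle_self, replaceMiddle_succ]
      exact hU
    · rw [replaceMiddle_of_ne (i := i + 1) U (by omega) (by omega)]
      rcases (Nat.succ_le_of_lt hi).eq_or_lt with hi | hi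
      · rw [← hi, replaceMiddle_succ]
        exact hUL.trans (hL.2.1 _)
      · rw [replaceMiddle_of_ne U (by omega) (by omega)]
        exact hL.2.1 i
  · rw [replaceMiddle_of_ne U (by omega) (by omega), hL.2.2.1 i hi]
  · rcases eq_or_ne i r with rfl | hir
    · rw [show 2 * i + 1 - i = i + 1 by omega, replaceMiddle_self, replaceMiddle_succ]
    rcases eq_or_ne i (r + 1) with rfl | hir'
    · rw [show 2 * r + 1 - (r + 1) = r by omega, replaceMiddle_self, replaceMiddle_succ,
        perpB_perpB hΦ hrefl]
    · rw [replaceMiddle_of_ne U (by omega) (by omega), replaceMiddle_of_ne U hir hir',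
        hL.2.2.2 i hi]

lemma inf_eq_of_le_middle (hL : IsFlag Φ (2 * r + 1) L) (hL' : IsFlag Φ (2 * r + 1) L')
    (hlt : ∀ i < r, L' i = L i) (hle : L r ≤ L' r) (i j : ℕ) :
    L i ⊓ L' j = if i < j ∨ i = j ∧ i ≤ r then L i else L' j := by
  have hmid : L' (r + 1) ≤ L (r + 1) := by
    rw [← hL.perpB_middle, ← hL'.perpB_middle]
    exact perpB_anti hle
  have hbelow {i : ℕ} (hi : i ≤ r) : L i ≤ L' i := by
    rcases hi.eq_or_lt with rfl | hi
    exacts [hle, (hlt i hi).ge]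
  have habove {i : ℕ} (hi : r + 1 ≤ i) : L' i ≤ L i := by
    rcases hi.eq_or_lt with rfl | hi
    exacts [hmid, (hL.eq_of_eqOn_lt hL' hlt hi).le]
  split_ifs with h
  · refine inf_eq_left.2 ?_
    rcases le_or_gt i r with hi | hi
    · exact (hbelow hi).trans (hL'.monotone (by omega))
    · exact (hL.monotone (by omega)).trans (hL.eq_of_eqOn_lt hL' hlt (i := j) (by omega)).ge
  · refine inf_eq_right.2 ?_
    rcases lt_trichotomy j r with hj | rfl | hj
    · exact (hlt j hj).le.trans (hL.monotone (by omega))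
    · exact (hL'.2.1 j).trans (hmid.trans (hL.monotone (by omega)))
    · exact (habove hj).trans (hL.monotone (by omega))

variable [FiniteDimensional k V]

lemma IsFlag.finrank_middle_add (hL : IsFlag Φ (2 * r + 1) L)
    (hΦ : LinearMap.Nondegenerate Φ) :
    finrank k (L (r + 1)) + finrank k (L r) = finrank k V := by
  rw [← hL.perpB_middle]
  exact finrank_perpB_add_finrank hΦ (L r)

lemma IsFlag.hasRelPos_iff {n : ℕ} {A : ℕ → ℕ → ℤ} (hL : IsFlag Φ n L) (hM : IsFlag Φ n M) :
    HasRelPos n A L M ↔ ∀ i ≤ n, ∀ j ≤ n, (finrank k ↥(L i ⊓ M j) : ℤ) = blockSum A i j :=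
  hasRelPos_iff_finrank_eq_blockSum hL.monotone hM.monotone hL.1 hM.1

lemma finrank_eq_blockSum_of_hasRelPos {n : ℕ} {A C : ℕ → ℕ → ℤ} (hL : IsFlag Φ n L)
    (hM : IsFlag Φ n M) (hAC : ∀ i ∈ Icc 1 n, roM n A i = coM n C i) (h : HasRelPos n A L M)
    {j : ℕ} (hj : j ≤ n) : (finrank k (L j) : ℤ) = blockSum C n j := by
  rw [← hM.inf_last (L j), (hL.hasRelPos_iff hM).1 h j hj n le_rfl, blockSum, blockSum]
  exact (sum_congr rfl fun i hi => hAC i (by grind)).trans sum_comm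

lemma le_middle_of_hasRelPos (hr : 1 ≤ r) {R : ℕ} {C : ℕ → ℕ → ℤ} (hC : IsDiagonalUpTo r R C)
    (hL : IsFlag Φ (2 * r + 1) L) (hL' : IsFlag Φ (2 * r + 1) L')
    (hdim : ∀ j ≤ 2 * r + 1, (finrank k (L' j) : ℤ) = blockSum C (2 * r + 1) j)
    (h : HasRelPos (2 * r + 1) C L L') :
    (∀ i < r, L' i = L i) ∧ L r ≤ L' r ∧ finrank k (L' r) = finrank k (L r) + R := by
  have hrel {i j : ℕ} (hi : i ≤ r) (hj : j ≤ 2 * r + 1) :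
      (finrank k ↥(L i ⊓ L' j) : ℤ) = ∑ x ∈ Icc 1 (min i j), C x x := by
    rw [(hL.hasRelPos_iff hL').1 h i (by omega) j hj, hC.blockSum_eq hr (by omega) hj]
    simp only [show ¬ r + 1 ≤ i by omega, false_and, if_false, add_zero, mul_zero]
  have hLdim {i : ℕ} (hi : i ≤ r) : (finrank k (L i) : ℤ) = ∑ x ∈ Icc 1 i, C x x := by
    rw [← hL'.inf_last (L i), hrel hi le_rfl, min_eq_left (by omega)]
  have hle {i : ℕ} (hi : i ≤ r) : L i ≤ L' i := by
    refine inf_eq_left.1 (Submodule.eq_of_le_of_finrank_eq inf_le_left ?_)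
    have := hrel hi (j := i) (by omega)
    rw [min_self, ← hLdim hi] at this
    exact_mod_cast this
  have hL'dim {i : ℕ} (hi : i ≤ r) :
      (finrank k (L' i) : ℤ) = finrank k (L i) + R * if r ≤ i then 1 else 0 := by
    rw [hdim i (by omega), hC.blockSum_last hr (by omega), ← hLdim hi,
      if_neg (show ¬ r + 2 ≤ i by omega), add_zero]
  refine ⟨fun i hi => ?_, hle le_rfl, ?_⟩
  · refine (Submodule.eq_of_le_of_finrank_eq (hle hi.le) ?_).symm
    have := hL'dim hi.le
    rw [if_neg (by omega)] at this
    omega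
  · have := hL'dim le_rfl
    rw [if_pos le_rfl] at this
    omega

lemma finrank_eq_of_le_middle (hΦ : LinearMap.Nondegenerate Φ) (hr : 1 ≤ r) {R : ℕ}
    {C : ℕ → ℕ → ℤ} (hC : IsDiagonalUpTo r R C) (hL : IsFlag Φ (2 * r + 1) L)
    (hL' : IsFlag Φ (2 * r + 1) L')
    (hdim : ∀ j ≤ 2 * r + 1, (finrank k (L' j) : ℤ) = blockSum C (2 * r + 1) j)
    (hlt : ∀ i < r, L' i = L i) (hR : finrank k (L' r) = finrank k (L r) + R) {i : ℕ}
    (hi : i ≤ 2 * r + 1) :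
    (finrank k (L i) : ℤ) = ∑ x ∈ Icc 1 i, C x x + R * if r + 1 ≤ i then 2 else 0 := by
  have hdim_i := (hdim i hi).trans (hC.blockSum_last hr hi)
  rcases lt_trichotomy i r with h | rfl | h
  · grind
  · grind
  · rcases (Nat.succ_le_of_lt h).eq_or_lt with rfl | h
    · have := hL.finrank_middle_add hΦ
      have := hL'.finrank_middle_add hΦ
      grind
    · rw [hL.eq_of_eqOn_lt hL' hlt h] at hdim_i
      grind

lemma hasRelPos_of_le_middle (hΦ : LinearMap.Nondegenerate Φ) (hr : 1 ≤ r) {R : ℕ}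
    {C : ℕ → ℕ → ℤ} (hC : IsDiagonalUpTo r R C) (hL : IsFlag Φ (2 * r + 1) L)
    (hL' : IsFlag Φ (2 * r + 1) L')
    (hdim : ∀ j ≤ 2 * r + 1, (finrank k (L' j) : ℤ) = blockSum C (2 * r + 1) j)
    (hlt : ∀ i < r, L' i = L i) (hle : L r ≤ L' r)
    (hR : finrank k (L' r) = finrank k (L r) + R) : HasRelPos (2 * r + 1) C L L' := by
  refine (hL.hasRelPos_iff hL').2 fun i hi j hj => ?_
  rw [hC.blockSum_eq hr hi hj]
  by_cases h : i < j ∨ i = j ∧ i ≤ r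
  · rw [inf_eq_of_le_middle hL hL' hlt hle, if_pos h,
      finrank_eq_of_le_middle hΦ hr hC hL hL' hdim hlt hR hi, min_eq_left (by omega)]
    grind
  · rw [inf_eq_of_le_middle hL hL' hlt hle, if_neg h, hdim j hj, hC.blockSum_last hr hj,
      min_eq_right (by omega)]
    grind

lemma hasRelPos_iff_shift (hΦ : LinearMap.Nondegenerate Φ) (hr : 1 ≤ r) {A : ℕ → ℕ → ℤ}
    {t : ℕ → ℕ} (hL : IsFlag Φ (2 * r + 1) L) (hL' : IsFlag Φ (2 * r + 1) L')
    (hM : IsFlag Φ (2 * r + 1) M) (hlt : ∀ i < r, L' i = L i)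
    (ht : ∀ j ≤ 2 * r + 1,
      finrank k ↥(L' r ⊓ M j) = finrank k ↥(L r ⊓ M j) + ∑ x ∈ Icc 1 j, t x) :
    HasRelPos (2 * r + 1) A L' M ↔ HasRelPos (2 * r + 1) (shift r A t) L M := by
  rw [hL.hasRelPos_iff hM, hL'.hasRelPos_iff hM]
  refine forall₄_congr fun i hi j hj => ?_
  rw [blockSum_shift hr A t hj]
  rcases eq_or_ne i r with rfl | hir
  · have := ht j hj
    rw [if_pos rfl, if_neg (by omega), ← Nat.cast_sum]
    omega
  rcases eq_or_ne i (r + 1) with rfl | hir'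
  · have hperp := hM.finrank_perpB_inf_add_finrank hΦ (L r) hj
    have hperp' := hM.finrank_perpB_inf_add_finrank hΦ (L' r) hj
    have hsum := sum_Icc_add_sum_reflect t hj
    rw [show 2 * r + 1 + 1 = 2 * r + 2 from rfl] at hsum
    have := ht (2 * r + 1 - j) (Nat.sub_le _ j)
    have hlast := ht _ le_rfl
    rw [hM.inf_last, hM.inf_last] at hlast
    rw [hL.perpB_middle] at hperp
    rw [hL'.perpB_middle] at hperp'
    rw [if_neg r.succ_ne_self, if_pos rfl, ← Nat.cast_sum]
    omega
  · have hLi : L' i = L i := by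
      rcases lt_or_ge i r with h | h
      exacts [hlt i h, hL.eq_of_eqOn_lt hL' hlt (by omega)]
    rw [hLi, if_neg hir, if_neg hir', sub_zero, add_zero]

lemma hasPerpJumps_of_hasRelPos_shift (hr : 1 ≤ r) {A : ℕ → ℕ → ℤ} {t : ℕ → ℕ}
    (hL : IsFlag Φ (2 * r + 1) L) (hM : IsFlag Φ (2 * r + 1) M)
    (h : HasRelPos (2 * r + 1) (shift r A t) L M) :
    HasPerpJumps Φ (2 * r + 1) M (L r) (perpJumps (2 * r + 1) (A (r + 1)) t) := by
  intro j hj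
  have hrel := (hL.hasRelPos_iff hM).1 h
  rw [hL.perpB_middle, hrel _ (by omega) j hj, hrel _ (by omega) j hj, blockSum_shift hr A t hj,
    blockSum_shift hr A t hj, blockSum_succ_left, if_pos rfl, if_pos rfl, if_neg (by omega),
    if_neg (by omega)]
  simp only [perpJumps, sum_add_distrib]
  ring

end Enlargement

section Multiplication

/-- The conditions on the index `t` of a summand in the multiplication formula. -/
def IsJump (r R : ℕ) (A : ℕ → ℕ → ℤ) (t : ℕ → ℕ) : Prop :=
  (∀ u, t u ≠ 0 → u ∈ Icc 1 (2 * r + 1)) ∧ (∑ u ∈ Icc 1 (2 * r + 1), t u = R) ∧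
    ∀ u ∈ Icc 1 (2 * r + 1), (t u : ℤ) ≤ A r u

variable {k V : Type*} [Field k] [AddCommGroup V] [Module k V] {Φ : V →ₗ[k] V →ₗ[k] k}

lemma conv_eMat_eq_ncard {n : ℕ} (C A : ℕ → ℕ → ℤ) (LM : Flags Φ n × Flags Φ n) :
    conv Φ n (eMat Φ n C) (eMat Φ n A) LM =
      ({N : Flags Φ n | HasRelPos n C LM.1.1 N.1 ∧ HasRelPos n A N.1 LM.2.1}.ncard : ℚ) := by
  set s := {N : Flags Φ n | HasRelPos n C LM.1.1 N.1 ∧ HasRelPos n A N.1 LM.2.1}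
  have hterm (N : Flags Φ n) : eMat Φ n C (LM.1, N) * eMat Φ n A (N, LM.2) =
      ∑ᶠ _ : N ∈ s, (1 : ℚ) := by
    rw [eMat_apply, eMat_apply, finsum_eq_if, ite_zero_mul_ite_zero, one_mul]
    rfl
  rw [conv, finsum_congr hterm]
  rcases s.finite_or_infinite with hfin | hinf
  · rw [finsum_mem_eq_finite_toFinset_sum _ hfin, sum_const, Set.ncard_eq_toFinset_card s hfin,
      nsmul_one]
  · rw [hinf.ncard, finsum_mem_eq_zero_of_infinite (by simpa [Function.support_const])]
    rfl

variable {r R : ℕ} {A C : ℕ → ℕ → ℤ} {L M N : ℕ → Submodule k V} {t t' : ℕ → ℕ}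

lemma IsJump.eq_of_hasRelPos_shift (ht : IsJump r R A t) (ht' : IsJump r R A t')
    (h : HasRelPos (2 * r + 1) (shift r A t) L M) (hr : 1 ≤ r)
    (h' : HasRelPos (2 * r + 1) (shift r A t') L M) : t = t' := by
  funext u
  by_cases hu : u ∈ Icc 1 (2 * r + 1)
  · have hrow := (h r (by grind) u hu).symm.trans (h' r (by grind) u hu)
    rw [shift_apply_row hu, shift_apply_row hu] at hrow
    omega
  · rw [of_not_not fun h => hu (ht.1 u h), of_not_not fun h => hu (ht'.1 u h)]

variable [FiniteDimensional k V]

lemma exists_isJump (hΦ : LinearMap.Nondegenerate Φ) (hr : 1 ≤ r) (hC : IsDiagonalUpTo r R C)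
    (hAC : ∀ i ∈ Icc 1 (2 * r + 1), roM (2 * r + 1) A i = coM (2 * r + 1) C i)
    (hL : IsFlag Φ (2 * r + 1) L) (hM : IsFlag Φ (2 * r + 1) M) (hN : IsFlag Φ (2 * r + 1) N)
    (hLN : HasRelPos (2 * r + 1) C L N) (hNM : HasRelPos (2 * r + 1) A N M) :
    (∀ i < r, N i = L i) ∧ ∃ t, IsJump r R A t ∧ HasRelPos (2 * r + 1) (shift r A t) L M ∧
      N r ∈ isotropicExtensions Φ (2 * r + 1) M (L r) t := by
  obtain ⟨hlt, hle, hR⟩ := le_middle_of_hasRelPos hr hC hL hN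
    (fun j hj => finrank_eq_blockSum_of_hasRelPos hN hM hAC hNM hj) hLN
  obtain ⟨t, hsupp, ht⟩ := exists_jumps hM.monotone hM.1 hle (2 * r + 1)
  have hLM := (hasRelPos_iff_shift hΦ hr hL hN hM hlt ht).1 hNM
  refine ⟨hlt, t, ⟨hsupp, ?_, fun u hu => ?_⟩, hLM, hle, ?_, ht⟩
  · have := ht _ le_rfl
    rw [hM.inf_last, hM.inf_last] at this
    omega
  · have := hLM.nonneg (i := r) (by grind) hu
    rw [shift_apply_row hu] at this
    omega
  · exact hN.le_perpB_middle

lemma hasRelPos_of_mem_isotropicExtensions (hΦ : LinearMap.Nondegenerate Φ) (hr : 1 ≤ r)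
    (hC : IsDiagonalUpTo r R C)
    (hAC : ∀ i ∈ Icc 1 (2 * r + 1), roM (2 * r + 1) A i = coM (2 * r + 1) C i)
    (hL : IsFlag Φ (2 * r + 1) L) (hM : IsFlag Φ (2 * r + 1) M) (hN : IsFlag Φ (2 * r + 1) N)
    (hlt : ∀ i < r, N i = L i) (ht : ∑ u ∈ Icc 1 (2 * r + 1), t u = R)
    (hLM : HasRelPos (2 * r + 1) (shift r A t) L M)
    (hU : N r ∈ isotropicExtensions Φ (2 * r + 1) M (L r) t) :
    HasRelPos (2 * r + 1) C L N ∧ HasRelPos (2 * r + 1) A N M := by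
  obtain ⟨hle, -, hjump⟩ := hU
  have hNM := (hasRelPos_iff_shift hΦ hr hL hN hM hlt hjump).2 hLM
  refine ⟨hasRelPos_of_le_middle hΦ hr hC hL hN
    (fun j hj => finrank_eq_blockSum_of_hasRelPos hN hM hAC hNM hj) hlt hle ?_, hNM⟩
  have := hjump _ le_rfl
  rwa [hM.inf_last, hM.inf_last, ht] at this

lemma ncard_flags_eq_ncard_isotropicExtensions (hΦ : LinearMap.Nondegenerate Φ)
    (hrefl : LinearMap.IsRefl Φ) (hr : 1 ≤ r) (hC : IsDiagonalUpTo r R C)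
    (hAC : ∀ i ∈ Icc 1 (2 * r + 1), roM (2 * r + 1) A i = coM (2 * r + 1) C i)
    (hL : IsFlag Φ (2 * r + 1) L) (hM : IsFlag Φ (2 * r + 1) M) (ht : IsJump r R A t)
    (hLM : HasRelPos (2 * r + 1) (shift r A t) L M) :
    {N : Flags Φ (2 * r + 1) |
        HasRelPos (2 * r + 1) C L N.1 ∧ HasRelPos (2 * r + 1) A N.1 M}.ncard =
      (isotropicExtensions Φ (2 * r + 1) M (L r) t).ncard := by
  refine Set.ncard_congr (fun N _ => N.1 r) (fun N hN => ?_) (fun N N' hN hN' h => ?_)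
    fun U hU => ?_
  · obtain ⟨-, t', ht', hLM', hU⟩ := exists_isJump hΦ hr hC hAC hL hM N.2 hN.1 hN.2
    rwa [ht.eq_of_hasRelPos_shift ht' hLM hr hLM']
  · have hlt := (exists_isJump hΦ hr hC hAC hL hM N.2 hN.1 hN.2).1
    have hlt' := (exists_isJump hΦ hr hC hAC hL hM N'.2 hN'.1 hN'.2).1
    exact Subtype.ext ((hL.eq_replaceMiddle N.2 hlt).trans
      (h ▸ (hL.eq_replaceMiddle N'.2 hlt').symm))
  · have hflag := hL.replaceMiddle hΦ hrefl hr hU.1 hU.2.1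
    refine ⟨⟨_, hflag⟩, hasRelPos_of_mem_isotropicExtensions hΦ hr hC hAC hL hM hflag
      (fun i hi => replaceMiddle_of_ne U hi.ne (by omega)) ht.2.1 hLM ?_, replaceMiddle_self U⟩
    change replaceMiddle Φ r L U r ∈ _
    rwa [replaceMiddle_self]

end Multiplication

end FlagC

theorem statement3_general {k V : Type*} [Field k] [Finite k] [AddCommGroup V] [Module k V]
    [FiniteDimensional k V] {Φ : V →ₗ[k] V →ₗ[k] k} (halt : LinearMap.IsAlt Φ)
    (hnondeg : LinearMap.SeparatingLeft Φ) {r R : ℕ} (hr : 1 ≤ r) {A C : ℕ → ℕ → ℤ}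
    (hAC : ∀ i ∈ Finset.Icc 1 (2 * r + 1), roM (2 * r + 1) A i = coM (2 * r + 1) C i)
    (hC : IsDiagonalUpTo r R C) (LM : Flags Φ (2 * r + 1) × Flags Φ (2 * r + 1)) :
    conv Φ (2 * r + 1) (eMat Φ (2 * r + 1) C) (eMat Φ (2 * r + 1) A) LM =
      ∑ᶠ (t : ℕ → ℕ) (_ : IsJump r R A t),
        jumpCoeff (Nat.card k) r (A (r + 1)) t * eMat Φ (2 * r + 1) (shift r A t) LM := by
  have hΦ : LinearMap.Nondegenerate Φ := halt.isRefl.nondegenerate_iff_separatingLeft.2 hnondeg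
  obtain ⟨⟨L, hL⟩, ⟨M, hM⟩⟩ := LM
  simp only [conv_eMat_eq_ncard, eMat_apply, finsum_eq_if, mul_ite, mul_one, mul_zero, ← ite_and]
  by_cases hex : ∃ t, IsJump r R A t ∧ HasRelPos (2 * r + 1) (shift r A t) L M
  · obtain ⟨t, ht, hLM⟩ := hex
    rw [ncard_flags_eq_ncard_isotropicExtensions hΦ halt.isRefl hr hC hAC hL hM ht hLM,
      ncard_isotropicExtensions halt hΦ hM t ht.1 hL.le_perpB_middle
        (hasPerpJumps_of_hasRelPos_shift hr hL hM hLM),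
      prod_levelFactor (Nat.cast_ne_zero.2 Nat.card_pos.ne'), finsum_eq_single _ t,
      if_pos ⟨ht, hLM⟩]
    exact fun t' hne => if_neg fun h => hne (h.1.eq_of_hasRelPos_shift ht h.2 hr hLM)
  · have hempty : {N : Flags Φ (2 * r + 1) | HasRelPos (2 * r + 1) C L N.1 ∧
        HasRelPos (2 * r + 1) A N.1 M} = ∅ := Set.eq_empty_of_forall_notMem fun N hN => hex <|
      (exists_isJump hΦ hr hC hAC hL hM N.2 hN.1 hN.2).2.imp fun t ht => ⟨ht.1, ht.2.1⟩
    rw [hempty, Set.ncard_empty, Nat.cast_zero]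
    exact (finsum_eq_zero_of_forall_eq_zero fun t => if_neg fun h => hex ⟨t, h⟩).symm

/-- multiplication by a divided power of `f_r`, the `h = r` case,
finite type `C`. -/
theorem statement3 {k V : Type*} [Field k] [Fintype k] [AddCommGroup V] [Module k V]
    [FiniteDimensional k V]
    (hodd : Odd (Fintype.card k))
    (r d : ℕ) (hr : 1 ≤ r) (hd : 1 ≤ d)
    (hdim : Module.finrank k V = 2 * d)
    (Φ : V →ₗ[k] V →ₗ[k] k)
    (halt : ∀ v : V, Φ v v = 0)
    (hnondeg : ∀ v : V, (∀ w : V, Φ v w = 0) → v = 0)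
    (A C : ℕ → ℕ → ℤ)
    (hA : MemXiC (2 * r + 1) d A) (hC : MemXiC (2 * r + 1) d C)
    (hroco : ∀ i ∈ Finset.Icc 1 (2 * r + 1), roM (2 * r + 1) A i = coM (2 * r + 1) C i)
    (R : ℕ)
    (hCdiag : ∀ i ∈ Finset.Icc 1 (2 * r + 1), ∀ j ∈ Finset.Icc 1 (2 * r + 1), i ≠ j →
      C i j = (R : ℤ) * Eth (2 * r + 1) (r + 1) r i j) :
    ∀ LL : Flags Φ (2 * r + 1) × Flags Φ (2 * r + 1),
      conv Φ (2 * r + 1) (eMat Φ (2 * r + 1) C) (eMat Φ (2 * r + 1) A) LL =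
      ∑ᶠ t : ℕ → ℕ,
        if (∀ u, t u ≠ 0 → u ∈ Finset.Icc 1 (2 * r + 1)) ∧
            (∑ u ∈ Finset.Icc 1 (2 * r + 1), t u = R) ∧
            (∀ u ∈ Finset.Icc 1 (2 * r + 1), (t u : ℤ) ≤ A r u)
        then
          ((Fintype.card k : ℚ) ^
              ((∑ j ∈ Finset.Icc 1 (2 * r + 1), ∑ u ∈ Finset.Icc 1 (2 * r + 1),
                  if j < u then A (r + 1) j * (t u : ℤ) else 0) +
               (∑ j ∈ Finset.Icc 1 (2 * r + 1), ∑ u ∈ Finset.Icc 1 (2 * r + 1),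
                  if (2 * r + 2 - j < u ∧ u < j) then (t u : ℤ) * (t j : ℤ) else 0) +
               (∑ u ∈ Finset.Icc 1 (2 * r + 1),
                  if r + 1 < u then (t u : ℤ) * ((t u : ℤ) + 1) / 2 else 0))) *
            (∏ u ∈ (Finset.Icc 1 (2 * r + 1)).filter (fun u => u < r + 1),
              qbinom (Fintype.card k : ℚ) (A (r + 1) u + (t u : ℤ)) (t u)) *
            (∏ u ∈ (Finset.Icc 1 (2 * r + 1)).filter (fun u => r + 1 < u),
              qbinom (Fintype.card k : ℚ)
                (A (r + 1) u + (t u : ℤ) + (t (2 * r + 2 - u) : ℤ)) (t u)) *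
            (∏ i ∈ Finset.Icc 1 (t (r + 1)),
              qint (Fintype.card k : ℚ) (A (r + 1) (r + 1) + 2 * (i : ℤ)) /
                qint (Fintype.card k : ℚ) (i : ℤ)) *
            eMat Φ (2 * r + 1)
              (fun a b => A a b - ∑ u ∈ Finset.Icc 1 (2 * r + 1),
                (t u : ℤ) * (Eth (2 * r + 1) r u a b - Eth (2 * r + 1) (r + 1) u a b)) LL
        else 0 := by
  intro LM
  rw [← Nat.card_eq_fintype_card]
  exact (statement3_general halt hnondeg hr hroco hCdiag LM).trans
    (finsum_congr fun _ => @finsum_eq_if _ _ _ (_) _)
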